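/- Let C be a quasiminimal pregeometry class and H ∈ C uncountable. Then H is σ-saturated: for every subset X ⊆ H with |X| < |H| and every σ-type p over X in finitely many variables, p is realised in H. -/

import Mathlib

open FirstOrder FirstOrder.Language Set Cardinal



universe u u' v w

namespace QM

variable {L : FirstOrder.Language.{v, w}}

/-- Formulas of `L_{ω₁,ω}`: built from atomic formulas by negation, countable
conjunction (indexed by `ℕ`), and universal quantification; `α` is the type of free
variables and `n` counts the de Bruijn bound variables. Countable disjunctions and
the existential quantifier are definable via negation. -/
inductive InfFormula (L : FirstOrder.Language.{v, w}) (α : Type u) : ℕ → Type (max u v w)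
  | falsum {n : ℕ} : InfFormula L α n
  | equal {n : ℕ} (t₁ t₂ : L.Term (α ⊕ (Fin n))) : InfFormula L α n
  | rel {n l : ℕ} (R : L.Relations l) (ts : Fin l → L.Term (α ⊕ (Fin n))) : InfFormula L α n
  | not {n : ℕ} (φ : InfFormula L α n) : InfFormula L α n
  | iInf {n : ℕ} (φ : ℕ → InfFormula L α n) : InfFormula L α n
  | all {n : ℕ} (φ : InfFormula L α (n + 1)) : InfFormula L α n

/-- Satisfaction of an `L_{ω₁,ω}`-formula in an `L`-structure `M`, given an
assignment `v` of the free variables and `xs` of the bound variables. -/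
def InfFormula.Realize {M : Type u'} [L.Structure M] {α : Type u} :
    ∀ {n : ℕ}, InfFormula L α n → (α → M) → (Fin n → M) → Prop
  | _, .falsum, _, _ => False
  | _, .equal t₁ t₂, v, xs => t₁.realize (Sum.elim v xs) = t₂.realize (Sum.elim v xs)
  | _, .rel R ts, v, xs => Structure.RelMap R (fun i => (ts i).realize (Sum.elim v xs))
  | _, .not φ, v, xs => ¬ φ.Realize v xs
  | _, .iInf φ, v, xs => ∀ i : ℕ, (φ i).Realize v xs
  | _, .all φ, v, xs => ∀ x : M, φ.Realize v (Fin.snoc xs x)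

/-- An `L_{ω₁,ω}`-sentence. -/
abbrev InfSentence (L : FirstOrder.Language.{v, w}) := InfFormula L PEmpty 0

/-- Satisfaction of an `L_{ω₁,ω}`-sentence. -/
def InfSentence.RealizeS (M : Type u') [L.Structure M] (φ : InfSentence L) : Prop :=
  InfFormula.Realize (M := M) φ PEmpty.elim (fun i => i.elim0)

/-- Satisfaction of an `L_{ω₁,ω}`-formula with parameters from the set `A`
and `m` free variables `v̄`, at the tuple `v`. -/
def InfFormula.RealizeP {M : Type u'} [L.Structure M] {A : Set M} {m : ℕ}
    (φ : InfFormula L (↥A ⊕ Fin m) 0) (v : Fin m → M) : Prop :=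
  φ.Realize (Sum.elim Subtype.val v) (fun i => i.elim0)

/-- The domain of a partial map, viewed as a graph (set of pairs). -/
def pdom {H : Type*} {H' : Type*} (p : Set (H × H')) : Set H := Prod.fst '' p

/-- The image of a partial map, viewed as a graph (set of pairs). -/
def pimg {H : Type*} {H' : Type*} (p : Set (H × H')) : Set H' := Prod.snd '' p

/-- The image of a set `X` under a partial map given as a graph. -/
def pimage {H : Type*} {H' : Type*} (p : Set (H × H')) (X : Set H) : Set H' :=
  {b | ∃ a ∈ X, (a, b) ∈ p}

/-- A partial map (given as its graph `p`) is a partial embedding if it preserves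
quantifier-free first-order formulas. (This forces `p` to be the graph of an
injective partial function.) -/
def IsPartialEmbedding {H : Type u} {H' : Type u} [L.Structure H] [L.Structure H']
    (p : Set (H × H')) : Prop :=
  ∀ (n : ℕ) (φ : L.Formula (Fin n)), BoundedFormula.IsQF φ →
    ∀ (a : Fin n → H) (b : Fin n → H'), (∀ i, (a i, b i) ∈ p) →
      (φ.Realize a ↔ φ.Realize b)

/-- A partial map is a σ-embedding if it is a partial embedding and preserves all
`L_{ω₁,ω}`-formulas with (possibly infinitely many) parameters from its domain;
equivalently `⟨M, m⟩_{m ∈ dom p} ≡_{ω₁,ω} ⟨N, p(m)⟩_{m ∈ dom p}`. -/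
def IsSigmaEmbedding {H : Type u} {H' : Type u} [L.Structure H] [L.Structure H']
    (p : Set (H × H')) : Prop :=
  IsPartialEmbedding (L := L) p ∧
    ∀ (φ : InfFormula L (↥(pdom p)) 0) (b : ↥(pdom p) → H'),
      (∀ x : ↥(pdom p), ((x : H), b x) ∈ p) →
        (φ.Realize Subtype.val (fun i => i.elim0) ↔ φ.Realize b (fun i => i.elim0))

/-- A pregeometry (combinatorial geometry) on a set. -/
structure IsPregeometry {α : Type*} (cl : Set α → Set α) : Prop where
  subset_cl : ∀ X, X ⊆ cl X
  mono : ∀ ⦃X Y : Set α⦄, X ⊆ Y → cl X ⊆ cl Y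
  idem : ∀ X, cl (cl X) = cl X
  finChar : ∀ (X : Set α) (y : α), y ∈ cl X → ∃ F : Finset α, ↑F ⊆ X ∧ y ∈ cl ↑F
  exchange : ∀ (X : Set α) (a b : α), a ∈ cl (X ∪ {b}) → a ∉ cl X → b ∈ cl (X ∪ {a})

/-- A pair `⟨H, cl_H⟩` of an `L`-structure and a closure operator on it. -/
structure QMObj (L : FirstOrder.Language.{v, w}) where
  carrier : Type u
  [str : L.Structure carrier]
  cl : Set carrier → Set carrier

attribute [instance] QMObj.str

/-- `G` is countable and closed, or empty. -/
def CCOE (H : QMObj.{u} L) (G : Set H.carrier) : Prop :=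
  (G.Countable ∧ H.cl G = G) ∨ G = ∅

/-- The axioms for a class of pairs `⟨H, cl_H⟩` to be a quasiminimal pregeometry class. -/
structure IsQMClass (C : Set (QMObj.{u} L)) : Prop where
  /-- Closure under isomorphisms, transporting the closure operator. -/
  iso_closed : ∀ H ∈ C, ∀ (N : Type u) [_iN : L.Structure N] (f : H.carrier ≃[L] N),
      (⟨N, fun X => f '' (H.cl (f ⁻¹' X))⟩ : QMObj L) ∈ C
  /-- Any two members satisfy the same quantifier-free sentences. -/
  qf_theory : ∀ H ∈ C, ∀ H' ∈ C, ∀ (φ : L.Sentence), BoundedFormula.IsQF φ →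
      (H.carrier ⊨ φ ↔ H'.carrier ⊨ φ)
  /-- Each `cl_H` is a pregeometry. -/
  pregeom : ∀ H ∈ C, IsPregeometry H.cl
  /-- The closure of a finite set is countable. -/
  cl_finite_countable : ∀ H ∈ C, ∀ X : Set H.carrier, X.Finite → (H.cl X).Countable
  /-- The closure of any set is (the underlying set of) a substructure which, with the
  restricted closure operator, is again a member of the class. -/
  cl_mem : ∀ H ∈ C, ∀ X : Set H.carrier, ∃ S : L.Substructure H.carrier,
      (S : Set H.carrier) = H.cl X ∧
      (⟨↥S, fun Y => Subtype.val ⁻¹' (H.cl (Subtype.val '' Y))⟩ : QMObj L) ∈ C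
  /-- Partial embeddings preserve and reflect the closure relation. -/
  cl_embedding : ∀ H ∈ C, ∀ H' ∈ C, ∀ (p : Set (H.carrier × H'.carrier)),
      IsPartialEmbedding (L := L) p → ∀ X ⊆ pdom p, ∀ (y : H.carrier) (y' : H'.carrier),
        (y, y') ∈ p → (y ∈ H.cl X ↔ y' ∈ H'.cl (pimage p X))
  /-- ℵ₀-homogeneity over countable closed models, part (i): an isomorphism between
  countable closed (or empty) sets extends by any pair of independent points. -/
  homogeneity₁ : ∀ H ∈ C, ∀ H' ∈ C, ∀ (g : Set (H.carrier × H'.carrier)),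
      CCOE H (pdom g) → CCOE H' (pimg g) → IsPartialEmbedding (L := L) g →
      ∀ (x : H.carrier) (x' : H'.carrier), x ∉ H.cl (pdom g) → x' ∉ H'.cl (pimg g) →
        IsPartialEmbedding (L := L) (g ∪ {(x, x')})
  /-- ℵ₀-homogeneity over countable closed models, part (ii). -/
  homogeneity₂ : ∀ H ∈ C, ∀ H' ∈ C, ∀ (g f : Set (H.carrier × H'.carrier)),
      CCOE H (pdom g) → CCOE H' (pimg g) → IsPartialEmbedding (L := L) g →
      (pdom f).Finite → IsPartialEmbedding (L := L) (g ∪ f) →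
      ∀ y ∈ H.cl (pdom f ∪ pdom g), ∃ y' : H'.carrier,
        IsPartialEmbedding (L := L) (g ∪ f ∪ {(y, y')})


/-- `p` is a σ-type over `A` in `m` variables: every countable subset of `p` is
consistent with the structure, i.e. simultaneously satisfiable. -/
def IsSigmaType {M : Type u'} [L.Structure M] {A : Set M} {m : ℕ}
    (p : Set (InfFormula L (↥A ⊕ Fin m) 0)) : Prop :=
  ∀ Φ ⊆ p, Φ.Countable → ∃ v : Fin m → M, ∀ φ ∈ Φ, φ.RealizeP v

/-- A σ-type `p` is isolated if there is a consistent `L_{ω₁,ω}`-formula `ψ(x̄)`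
(possibly with parameters from `M`) such that `ψ` implies every formula of `p`. -/
def IsIsolated {M : Type u'} [L.Structure M] {A : Set M} {m : ℕ}
    (p : Set (InfFormula L (↥A ⊕ Fin m) 0)) : Prop :=
  ∃ ψ : InfFormula L (M ⊕ Fin m) 0,
    (∃ v : Fin m → M, ψ.Realize (Sum.elim id v) (fun i => i.elim0)) ∧
    ∀ φ ∈ p, ∀ v : Fin m → M, ψ.Realize (Sum.elim id v) (fun i => i.elim0) → φ.RealizeP v

/-- A σ-type `p` is realised if some tuple satisfies every formula of `p`. -/
def IsRealized {M : Type u'} [L.Structure M] {A : Set M} {m : ℕ}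
    (p : Set (InfFormula L (↥A ⊕ Fin m) 0)) : Prop :=
  ∃ v : Fin m → M, ∀ φ ∈ p, φ.RealizeP v

/-- `B` is an independent subset of the pregeometry `⟨H, cl_H⟩`. -/
def IsIndep (H : QMObj.{u} L) (B : Set H.carrier) : Prop :=
  ∀ x ∈ B, x ∉ H.cl (B \ {x})

/-- `B` is a basis of the pregeometry `⟨H, cl_H⟩`: a maximal independent subset. -/
def IsBasis (H : QMObj.{u} L) (B : Set H.carrier) : Prop :=
  IsIndep H B ∧ ∀ B' : Set H.carrier, B ⊆ B' → IsIndep H B' → B' = B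

/-- The model-theoretic algebraic closure of `X` in `M`: the set of elements
satisfying some first-order formula with parameters in `X` having finitely many
solutions. -/
def aclS (L : FirstOrder.Language.{v, w}) (M : Type u) [L.Structure M] (X : Set M) :
    Set M :=
  {y | ∃ (n : ℕ) (φ : L.BoundedFormula (Fin n) 1) (v : Fin n → M),
    (∀ i, v i ∈ X) ∧ φ.Realize v ![y] ∧ {z : M | φ.Realize v ![z]}.Finite}

section Helpers

open Classical

theorem pe_swap {H H' : Type u} [L.Structure H] [L.Structure H'] {p : Set (H × H')}
    (hp : IsPartialEmbedding (L := L) p) : IsPartialEmbedding (L := L) (Prod.swap ⁻¹' p) :=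
  fun n φ hφ a b h => (hp n φ hφ b a h).symm

theorem pe_mono {H H' : Type u} [L.Structure H] [L.Structure H'] {p q : Set (H × H')}
    (hq : IsPartialEmbedding (L := L) q) (h : p ⊆ q) : IsPartialEmbedding (L := L) p :=
  fun n φ hφ a b hab => hq n φ hφ a b (fun i => h (hab i))

theorem pe_fun {H H' : Type u} [L.Structure H] [L.Structure H'] {p : Set (H × H')}
    (hp : IsPartialEmbedding (L := L) p) {x : H} {y z : H'} (hy : (x, y) ∈ p)
    (hz : (x, z) ∈ p) : y = z := by
  have := hp 2 (Term.equal (Term.var 0) (Term.var 1))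
    (BoundedFormula.IsAtomic.equal _ _).isQF ![x, x] ![y, z]
    (by intro i; fin_cases i <;> simpa)
  simpa using this

theorem pe_rel {H H' : Type u} [L.Structure H] [L.Structure H'] {p : Set (H × H')}
    (hp : IsPartialEmbedding (L := L) p) {β : Type*} [DecidableEq β] {l : ℕ} (R : L.Relations l)
    (ts : Fin l → L.Term β) (a : β → H) (b : β → H')
    (hab : ∀ i, ∀ x ∈ (ts i).varFinset, (a x, b x) ∈ p) :
    Structure.RelMap R (fun i => (ts i).realize a) ↔
      Structure.RelMap R (fun i => (ts i).realize b) := by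
  let S : Finset β := Finset.univ.biUnion fun i => (ts i).varFinset
  let e : S ≃ Fin S.card := S.equivFin
  have hS : ∀ i, (ts i).varFinset ⊆ S := fun i =>
    Finset.subset_biUnion_of_mem (fun i => (ts i).varFinset) (Finset.mem_univ i)
  let ts' : Fin l → L.Term (Fin S.card) := fun i =>
    (ts i).restrictVar (fun x => e ⟨x.1, hS i x.2⟩)
  have key := hp S.card (R.formula ts') (BoundedFormula.IsAtomic.rel _ _).isQF
    (fun j => a (e.symm j).1) (fun j => b (e.symm j).1) (by
      intro j
      have := (e.symm j).2
      simp only [S, Finset.mem_biUnion] at this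
      obtain ⟨i, -, hi⟩ := this
      exact hab i _ hi)
  rw [Formula.realize_rel, Formula.realize_rel] at key
  have h1 : ∀ i, (ts' i).realize (fun j => a (e.symm j).1) = (ts i).realize a := fun i =>
    Term.realize_restrictVar _ (by simp)
  have h2 : ∀ i, (ts' i).realize (fun j => b (e.symm j).1) = (ts i).realize b := fun i =>
    Term.realize_restrictVar _ (by simp)
  simpa only [h1, h2] using key

theorem pe_equal {H H' : Type u} [L.Structure H] [L.Structure H'] {p : Set (H × H')}
    (hp : IsPartialEmbedding (L := L) p) {β : Type*} [DecidableEq β]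
    (t₁ t₂ : L.Term β) (a : β → H) (b : β → H')
    (h₁ : ∀ x ∈ t₁.varFinset, (a x, b x) ∈ p) (h₂ : ∀ x ∈ t₂.varFinset, (a x, b x) ∈ p) :
    t₁.realize a = t₂.realize a ↔ t₁.realize b = t₂.realize b := by
  let S : Finset β := t₁.varFinset ∪ t₂.varFinset
  let e : S ≃ Fin S.card := S.equivFin
  let s₁ : L.Term (Fin S.card) :=
    t₁.restrictVar (fun x => e ⟨x.1, Finset.mem_union_left _ x.2⟩)
  let s₂ : L.Term (Fin S.card) :=
    t₂.restrictVar (fun x => e ⟨x.1, Finset.mem_union_right _ x.2⟩)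
  have key := hp S.card (s₁.equal s₂) (BoundedFormula.IsAtomic.equal _ _).isQF
    (fun j => a (e.symm j).1) (fun j => b (e.symm j).1) (by
      intro j
      rcases Finset.mem_union.1 (e.symm j).2 with h | h
      · exact h₁ _ h
      · exact h₂ _ h)
  rw [Formula.realize_equal, Formula.realize_equal] at key
  have a1 : s₁.realize (fun j => a (e.symm j).1) = t₁.realize a :=
    Term.realize_restrictVar _ (by simp)
  have a2 : s₁.realize (fun j => b (e.symm j).1) = t₁.realize b :=
    Term.realize_restrictVar _ (by simp)
  have a3 : s₂.realize (fun j => a (e.symm j).1) = t₂.realize a :=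
    Term.realize_restrictVar _ (by simp)
  have a4 : s₂.realize (fun j => b (e.symm j).1) = t₂.realize b :=
    Term.realize_restrictVar _ (by simp)
  rwa [a1, a2, a3, a4] at key

/-- Free variables (in `α`) of an infinitary formula. -/
def InfFormula.fv {α : Type u} : ∀ {n : ℕ}, InfFormula L α n → Set α
  | _, .falsum => ∅
  | _, .equal t₁ t₂ => {a | Sum.inl a ∈ t₁.varFinset} ∪ {a | Sum.inl a ∈ t₂.varFinset}
  | _, .rel _ ts => ⋃ i, {a | Sum.inl a ∈ (ts i).varFinset}
  | _, .not φ => φ.fv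
  | _, .iInf φ => ⋃ i, (φ i).fv
  | _, .all φ => φ.fv

theorem countable_inl {α β : Type*} [DecidableEq (α ⊕ β)] (t : L.Term (α ⊕ β)) :
    {a | Sum.inl a ∈ t.varFinset}.Countable :=
  (t.varFinset.countable_toSet).preimage_of_injOn (f := Sum.inl) Sum.inl_injective.injOn

theorem fv_countable {α : Type u} {n : ℕ} (φ : InfFormula L α n) : φ.fv.Countable := by
  induction φ with
  | falsum => exact countable_empty
  | equal t₁ t₂ => exact (countable_inl t₁).union (countable_inl t₂)
  | rel R ts => exact countable_iUnion fun i => countable_inl _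
  | not φ ih => exact ih
  | iInf φ ih => exact countable_iUnion ih
  | all φ ih => exact ih

/-- graph of the identity on `G` -/
def idg {H : Type u} (G : Set H) : Set (H × H) := {x | x.1 ∈ G ∧ x.1 = x.2}

theorem pdom_idg {H : Type u} (G : Set H) : pdom (idg G) = G := by
  ext x; simp [pdom, idg]

theorem pimg_idg {H : Type u} (G : Set H) : pimg (idg G) = G := by
  ext x
  simp only [pimg, idg, mem_image, mem_ofPred_eq, Prod.exists, exists_eq_right]

theorem pe_idg {H : Type u} [L.Structure H] (G : Set H) :
    IsPartialEmbedding (L := L) (idg G) := by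
  intro n φ _ a b h
  have : a = b := funext fun i => (h i).2
  rw [this]

theorem swap_idg {H : Type u} (G : Set H) : Prod.swap ⁻¹' (idg G) = idg G := by
  ext ⟨x, y⟩
  simp only [idg, mem_preimage, Prod.swap_prod_mk, mem_ofPred_eq]
  constructor
  · rintro ⟨h, rfl⟩; exact ⟨h, rfl⟩
  · rintro ⟨h, rfl⟩; exact ⟨h, rfl⟩

theorem pdom_swap {H : Type u} (f : Set (H × H)) : pdom (Prod.swap ⁻¹' f) = pimg f := by
  ext x; simp [pdom, pimg]

theorem pimg_swap {H : Type u} (f : Set (H × H)) : pimg (Prod.swap ⁻¹' f) = pdom f := by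
  ext x; simp [pdom, pimg]

theorem pdom_union {H : Type u} (f g : Set (H × H)) : pdom (f ∪ g) = pdom f ∪ pdom g :=
  image_union _ _ _

theorem pimg_union {H : Type u} (f g : Set (H × H)) : pimg (f ∪ g) = pimg f ∪ pimg g :=
  image_union _ _ _

section cls

theorem cl_countable {C : Set (QMObj.{u} L)} (hC : IsQMClass C)
    {H : QMObj.{u} L} (hH : H ∈ C) {Z : Set H.carrier} (hZ : Z.Countable) : (H.cl Z).Countable := by
  have h : H.cl Z ⊆ ⋃ F ∈ {F : Set H.carrier | F.Finite ∧ F ⊆ Z}, H.cl F := by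
    intro y hy
    obtain ⟨F, hF, hy⟩ := (hC.pregeom H hH).finChar Z y hy
    simp only [mem_iUnion]
    exact ⟨F, ⟨F.finite_toSet, hF⟩, hy⟩
  refine Countable.mono h (Countable.biUnion (countable_ofPred_finite_subset hZ) ?_)
  intro F hF
  exact hC.cl_finite_countable H hH F hF.1

theorem cl_ne_top {C : Set (QMObj.{u} L)} (hC : IsQMClass C)
    {H : QMObj.{u} L} (hH : H ∈ C) (hunc : Uncountable H.carrier) {Z : Set H.carrier}
    (hZ : #Z < #H.carrier) : ∃ y, y ∉ H.cl Z := by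
  by_contra! hall
  have huniv : H.cl Z = Set.univ := eq_univ_of_forall hall
  by_cases hc : Z.Countable
  · have := cl_countable hC hH hc
    rw [huniv] at this
    exact not_countable (α := H.carrier) (countable_univ_iff.1 this)
  · have : Infinite Z := by
      by_contra hfin
      rw [not_infinite_iff_finite] at hfin
      exact hc (toFinite Z).countable
    have h : H.cl Z ⊆ ⋃ F : Finset Z, H.cl (Subtype.val '' (F : Set Z)) := by
      intro y hy
      obtain ⟨F, hF, hy⟩ := (hC.pregeom H hH).finChar Z y hy
      refine mem_iUnion.2 ⟨F.subtype (· ∈ Z), ?_⟩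
      refine (hC.pregeom H hH).mono ?_ hy
      intro x hx
      exact ⟨⟨x, hF hx⟩, by simpa using hx, rfl⟩
    rw [huniv] at h
    have h1 : #H.carrier ≤ #(Finset Z) * ⨆ F : Finset Z, #(H.cl (Subtype.val '' (F : Set Z))) := by
      rw [← mk_univ (α := H.carrier)]
      exact (mk_le_mk_of_subset h).trans (mk_iUnion_le _)
    have h2 : (⨆ F : Finset Z, #(H.cl (Subtype.val '' (F : Set Z)))) ≤ ℵ₀ := by
      refine ciSup_le' fun F => ?_
      exact (hC.cl_finite_countable H hH _ (F.finite_toSet.image _)).le_aleph0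
    rw [mk_finset_of_infinite] at h1
    have h3 : #Z * ℵ₀ = #Z := mul_aleph0_eq (aleph0_le_mk _)
    have := h1.trans ((mul_le_mul_right h2 _).trans_eq h3)
    exact absurd this (not_le.2 hZ)

/-- Forth step inside the closure. -/
theorem step_cl {C : Set (QMObj.{u} L)} (hC : IsQMClass C)
    {H : QMObj.{u} L} (hH : H ∈ C) {G : Set H.carrier} (hGc : G.Countable) (hG : H.cl G = G)
    {f : Set (H.carrier × H.carrier)} (hf : f.Finite)
    (hp : IsPartialEmbedding (L := L) (idg G ∪ f)) {y : H.carrier}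
    (hy : y ∈ H.cl (pdom f ∪ G)) :
    ∃ y' ∈ H.cl (pimg f ∪ G), IsPartialEmbedding (L := L) (idg G ∪ (f ∪ {(y, y')})) := by
  obtain ⟨y', hy'⟩ := hC.homogeneity₂ H hH H hH (idg G) f
    (by rw [pdom_idg]; exact Or.inl ⟨hGc, hG⟩) (by rw [pimg_idg]; exact Or.inl ⟨hGc, hG⟩)
    (pe_idg G) (hf.image _) hp y (by rwa [pdom_idg])
  refine ⟨y', ?_, by rwa [← union_assoc]⟩
  have h1 := (hC.cl_embedding H hH H hH _ hy' (pdom f ∪ G) (by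
    rw [pdom_union, pdom_union, pdom_idg]
    rintro x (h | h)
    · exact Or.inl (Or.inr h)
    · exact Or.inl (Or.inl h)) y y' (Or.inr rfl)).1 hy
  refine (hC.pregeom H hH).mono ?_ h1
  rintro b ⟨a, ha, hab⟩
  have hc : ∃ c, (a, c) ∈ idg G ∪ f := by
    rcases ha with ⟨⟨a1, c⟩, h, rfl⟩ | h
    · exact ⟨c, Or.inr h⟩
    · exact ⟨a, Or.inl ⟨h, rfl⟩⟩
  obtain ⟨c, hc⟩ := hc
  obtain rfl := pe_fun hy' hab (Or.inl hc)
  rcases hc with h | h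
  · right
    have h2 : a = b := h.2
    exact h2 ▸ h.1
  · left
    exact ⟨_, h, rfl⟩

/-- Back step. -/
theorem step_cl' {C : Set (QMObj.{u} L)} (hC : IsQMClass C)
    {H : QMObj.{u} L} (hH : H ∈ C) {G : Set H.carrier} (hGc : G.Countable) (hG : H.cl G = G)
    {f : Set (H.carrier × H.carrier)} (hf : f.Finite)
    (hp : IsPartialEmbedding (L := L) (idg G ∪ f)) {y : H.carrier}
    (hy : y ∈ H.cl (pimg f ∪ G)) :
    ∃ x ∈ H.cl (pdom f ∪ G), IsPartialEmbedding (L := L) (idg G ∪ (f ∪ {(x, y)})) := by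
  have hp' := pe_swap hp
  rw [preimage_union, swap_idg] at hp'
  obtain ⟨x, hx, h⟩ := step_cl hC hH hGc hG (f := Prod.swap ⁻¹' f)
    (hf.preimage Prod.swap_injective.injOn) hp' (y := y) (by rwa [pdom_swap])
  rw [pimg_swap] at hx
  refine ⟨x, hx, pe_mono (pe_swap h) ?_⟩
  rw [preimage_union, swap_idg, preimage_union]
  refine union_subset_union_right _ (union_subset_union ?_ ?_)
  · exact fun _ h => h
  · rintro _ rfl; rfl

theorem cl_absorb {C : Set (QMObj.{u} L)} (hC : IsQMClass C)
    {H : QMObj.{u} L} (hH : H ∈ C) {G A A' : Set H.carrier} (h : A' ⊆ H.cl (A ∪ G)) :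
    H.cl (A' ∪ G) ⊆ H.cl (A ∪ G) := by
  have hP := hC.pregeom H hH
  conv_rhs => rw [← hP.idem]
  refine hP.mono (union_subset h ?_)
  exact subset_union_right.trans (hP.subset_cl _)

theorem extend_cl {C : Set (QMObj.{u} L)} (hC : IsQMClass C)
    {H : QMObj.{u} L} (hH : H ∈ C) {G : Set H.carrier} (hGc : G.Countable) (hG : H.cl G = G)
    {f : Set (H.carrier × H.carrier)} (hf : f.Finite)
    (hp : IsPartialEmbedding (L := L) (idg G ∪ f)) :
    ∃ h : Set (H.carrier × H.carrier), idg G ∪ f ⊆ h ∧ IsPartialEmbedding (L := L) h ∧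
      pdom h = H.cl (pdom f ∪ G) ∧ pimg h = H.cl (pimg f ∪ G) := by
  have hP := hC.pregeom H hH
  set K := H.cl (pdom f ∪ G) with hK
  set K' := H.cl (pimg f ∪ G) with hK'
  have hKc : K.Countable := cl_countable hC hH ((hf.image _).countable.union hGc)
  have hKc' : K'.Countable := cl_countable hC hH ((hf.image _).countable.union hGc)
  have := hKc.to_subtype
  have := hKc'.to_subtype
  let P := {q : Set (H.carrier × H.carrier) // q.Finite ∧
    IsPartialEmbedding (L := L) (idg G ∪ q) ∧ f ⊆ q ∧ pdom q ⊆ K ∧ pimg q ⊆ K'}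
  let p0 : P := ⟨f, hf, hp, Subset.rfl, subset_union_left.trans (hP.subset_cl _),
    subset_union_left.trans (hP.subset_cl _)⟩
  have hadd : ∀ q : P, ∀ x ∈ K, ∀ y ∈ K',
      IsPartialEmbedding (L := L) (idg G ∪ (q.1 ∪ {(x, y)})) →
      ∃ q' : P, q ≤ q' ∧ (x, y) ∈ q'.1 := by
    intro q x hx y hy h
    refine ⟨⟨q.1 ∪ {(x, y)}, q.2.1.union (finite_singleton _), h,
      q.2.2.2.1.trans subset_union_left, ?_, ?_⟩, ?_, Or.inr rfl⟩
    · rw [pdom_union]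
      refine union_subset q.2.2.2.2.1 ?_
      simpa [pdom] using hx
    · rw [pimg_union]
      refine union_subset q.2.2.2.2.2 ?_
      simpa [pimg] using hy
    · exact fun z hz => Or.inl hz
  let D : K ⊕ K' → Order.Cofinal P := fun i => match i with
    | .inl x => ⟨{q | x.1 ∈ pdom q.1}, by
        intro q
        obtain ⟨y, hy, h⟩ := step_cl hC hH hGc hG q.2.1 q.2.2.1 (y := x.1)
          (hP.mono (union_subset_union_left _ (image_mono q.2.2.2.1)) x.2)
        obtain ⟨q', h1, h2⟩ := hadd q x.1 x.2 y (cl_absorb hC hH q.2.2.2.2.2 hy) h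
        exact ⟨q', ⟨_, h2, rfl⟩, h1⟩⟩
    | .inr x => ⟨{q | x.1 ∈ pimg q.1}, by
        intro q
        obtain ⟨y, hy, h⟩ := step_cl' hC hH hGc hG q.2.1 q.2.2.1 (y := x.1)
          (hP.mono (union_subset_union_left _ (image_mono q.2.2.2.1)) x.2)
        obtain ⟨q', h1, h2⟩ := hadd q y (cl_absorb hC hH q.2.2.2.2.1 hy) x.1 x.2 h
        exact ⟨q', ⟨_, h2, rfl⟩, h1⟩⟩
  have : Encodable (K ⊕ K') := Encodable.ofCountable _
  let I := Order.idealOfCofinals p0 D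
  refine ⟨⋃ q ∈ I, (idg G ∪ q.1), ?_, ?_, ?_, ?_⟩
  · exact subset_biUnion_of_mem (u := fun q : P => idg G ∪ q.1)
      (Order.mem_idealOfCofinals p0 D)
  · intro n φ hφ a b hab
    have hq : ∀ s : Finset (Fin n), ∃ q ∈ I, ∀ i ∈ s, (a i, b i) ∈ idg G ∪ q.1 := by
      intro s
      induction s using Finset.induction_on with
      | empty => exact ⟨p0, Order.mem_idealOfCofinals p0 D, by simp⟩
      | insert i s _ ih =>
        obtain ⟨q, hq, hs⟩ := ih
        have := hab i
        simp only [mem_iUnion] at this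
        obtain ⟨q1, hq1, hi⟩ := this
        obtain ⟨q2, hq2, h1, h2⟩ := I.directed q hq q1 hq1
        refine ⟨q2, hq2, ?_⟩
        intro j hj
        rcases Finset.mem_insert.1 hj with rfl | hj
        · exact union_subset_union_right _ h2 hi
        · exact union_subset_union_right _ h1 (hs j hj)
    obtain ⟨q, -, hs⟩ := hq Finset.univ
    exact q.2.2.1 n φ hφ a b (fun i => hs i (Finset.mem_univ i))
  · apply Subset.antisymm
    · rintro _ ⟨z, hz, rfl⟩
      simp only [mem_iUnion] at hz
      obtain ⟨q, -, h | h⟩ := hz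
      · exact hP.subset_cl _ (Or.inr h.1)
      · exact q.2.2.2.2.1 ⟨z, h, rfl⟩
    · intro x hx
      obtain ⟨q, ⟨z, hz, h1⟩, hq⟩ := Order.cofinal_meets_idealOfCofinals p0 D (.inl ⟨x, hx⟩)
      exact ⟨z, mem_biUnion hq (Or.inr hz), h1⟩
  · apply Subset.antisymm
    · rintro _ ⟨z, hz, rfl⟩
      simp only [mem_iUnion] at hz
      obtain ⟨q, -, h | h⟩ := hz
      · have h2 : z.1 = z.2 := h.2
        exact hP.subset_cl _ (Or.inr (h2 ▸ h.1))
      · exact q.2.2.2.2.2 ⟨z, h, rfl⟩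
    · intro x hx
      obtain ⟨q, ⟨z, hz, h1⟩, hq⟩ := Order.cofinal_meets_idealOfCofinals p0 D (.inr ⟨x, hx⟩)
      exact ⟨z, mem_biUnion hq (Or.inr hz), h1⟩

/-- Independent step. -/
theorem step_indep {C : Set (QMObj.{u} L)} (hC : IsQMClass C)
    {H : QMObj.{u} L} (hH : H ∈ C) {G : Set H.carrier} (hGc : G.Countable) (hG : H.cl G = G)
    {f : Set (H.carrier × H.carrier)} (hf : f.Finite)
    (hp : IsPartialEmbedding (L := L) (idg G ∪ f)) {y y' : H.carrier}
    (hy : y ∉ H.cl (pdom f ∪ G)) (hy' : y' ∉ H.cl (pimg f ∪ G)) :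
    IsPartialEmbedding (L := L) (idg G ∪ (f ∪ {(y, y')})) := by
  have hP := hC.pregeom H hH
  obtain ⟨h, hsub, hpe, hd, hi⟩ := extend_cl hC hH hGc hG hf hp
  have := hC.homogeneity₁ H hH H hH h
    (by rw [hd]; exact Or.inl ⟨cl_countable hC hH ((hf.image _).countable.union hGc), hP.idem _⟩)
    (by rw [hi]; exact Or.inl ⟨cl_countable hC hH ((hf.image _).countable.union hGc), hP.idem _⟩)
    hpe y y' (by rwa [hd, hP.idem]) (by rwa [hi, hP.idem])
  refine pe_mono this ?_
  rw [← union_assoc]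
  exact union_subset_union_left _ hsub

theorem step_any {C : Set (QMObj.{u} L)} (hC : IsQMClass C)
    {H : QMObj.{u} L} (hH : H ∈ C) (hunc : Uncountable H.carrier)
    {G : Set H.carrier} (hGc : G.Countable) (hG : H.cl G = G)
    {f : Set (H.carrier × H.carrier)} (hf : f.Finite)
    (hp : IsPartialEmbedding (L := L) (idg G ∪ f)) (y : H.carrier) :
    ∃ y', IsPartialEmbedding (L := L) (idg G ∪ (f ∪ {(y, y')})) := by
  by_cases hy : y ∈ H.cl (pdom f ∪ G)
  · obtain ⟨y', -, h⟩ := step_cl hC hH hGc hG hf hp hy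
    exact ⟨y', h⟩
  · have : ∃ y', y' ∉ H.cl (pimg f ∪ G) := by
      by_contra! hall
      have h1 := cl_countable hC hH ((hf.image Prod.snd).countable.union hGc)
      have h2 : H.cl (pimg f ∪ G) = Set.univ := eq_univ_of_forall hall
      rw [← pimg, h2] at h1
      exact not_countable (α := H.carrier) (countable_univ_iff.1 h1)
    obtain ⟨y', hy'⟩ := this
    exact ⟨y', step_indep hC hH hGc hG hf hp hy hy'⟩

theorem step_any' {C : Set (QMObj.{u} L)} (hC : IsQMClass C)
    {H : QMObj.{u} L} (hH : H ∈ C) (hunc : Uncountable H.carrier)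
    {G : Set H.carrier} (hGc : G.Countable) (hG : H.cl G = G)
    {f : Set (H.carrier × H.carrier)} (hf : f.Finite)
    (hp : IsPartialEmbedding (L := L) (idg G ∪ f)) (y : H.carrier) :
    ∃ x, IsPartialEmbedding (L := L) (idg G ∪ (f ∪ {(x, y)})) := by
  have hp' := pe_swap hp
  rw [preimage_union, swap_idg] at hp'
  obtain ⟨x, h⟩ := step_any hC hH hunc hGc hG (f := Prod.swap ⁻¹' f)
    (hf.preimage Prod.swap_injective.injOn) hp' y
  refine ⟨x, pe_mono (pe_swap h) ?_⟩
  rw [preimage_union, swap_idg, preimage_union]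
  refine union_subset_union_right _ (union_subset_union ?_ ?_)
  · exact fun _ h => h
  · rintro _ rfl; rfl

/-- Partial embeddings finite over a countable closed set are `L_{ω₁,ω}`-elementary. -/
theorem elementary {C : Set (QMObj.{u} L)} (hC : IsQMClass C)
    {H : QMObj.{u} L} (hH : H ∈ C) (hunc : Uncountable H.carrier)
    {G : Set H.carrier} (hGc : G.Countable) (hG : H.cl G = G)
    {α : Type u} {n : ℕ} (φ : InfFormula L α n) :
    ∀ (f : Set (H.carrier × H.carrier)), f.Finite →
    IsPartialEmbedding (L := L) (idg G ∪ f) → ∀ (v v' : α → H.carrier)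
    (xs xs' : Fin n → H.carrier), (∀ a ∈ φ.fv, (v a, v' a) ∈ idg G ∪ f) →
    (∀ i, (xs i, xs' i) ∈ idg G ∪ f) → (φ.Realize v xs ↔ φ.Realize v' xs') := by
  induction φ with
  | falsum => intros; exact Iff.rfl
  | equal t₁ t₂ =>
    intro f hf hp v v' xs xs' hv hxs
    refine pe_equal hp t₁ t₂ (Sum.elim v xs) (Sum.elim v' xs') ?_ ?_
    · rintro (a | i) h
      · exact hv a (Or.inl h)
      · exact hxs i
    · rintro (a | i) h
      · exact hv a (Or.inr h)
      · exact hxs i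
  | rel R ts =>
    intro f hf hp v v' xs xs' hv hxs
    refine pe_rel hp R ts (Sum.elim v xs) (Sum.elim v' xs') ?_
    rintro j (a | i) h
    · exact hv a (mem_iUnion.2 ⟨j, h⟩)
    · exact hxs i
  | not φ ih =>
    intro f hf hp v v' xs xs' hv hxs
    exact not_congr (ih f hf hp v v' xs xs' hv hxs)
  | iInf φ ih =>
    intro f hf hp v v' xs xs' hv hxs
    exact forall_congr' fun i => ih i f hf hp v v' xs xs'
      (fun a ha => hv a (mem_iUnion.2 ⟨i, ha⟩)) hxs
  | all φ ih =>
    intro f hf hp v v' xs xs' hv hxs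
    have key : ∀ x x', IsPartialEmbedding (L := L) (idg G ∪ (f ∪ {(x, x')})) →
        (φ.Realize v (Fin.snoc xs x) ↔ φ.Realize v' (Fin.snoc xs' x')) := by
      intro x x' hpe
      have hs : idg G ∪ f ⊆ idg G ∪ (f ∪ {(x, x')}) :=
        union_subset_union_right _ subset_union_left
      refine ih _ (hf.union (finite_singleton _)) hpe v v' _ _ (fun a ha => hs (hv a ha)) ?_
      intro i
      refine Fin.lastCases ?_ (fun i => ?_) i
      · simp
      · simpa only [Fin.snoc_castSucc] using hs (hxs i)
    constructor
    · intro h x'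
      obtain ⟨x, hx⟩ := step_any' hC hH hunc hGc hG hf hp x'
      exact (key x x' hx).1 (h x)
    · intro h x
      obtain ⟨x', hx⟩ := step_any hC hH hunc hGc hG hf hp x
      exact (key x x' hx).2 (h x')

theorem transfer {C : Set (QMObj.{u} L)} (hC : IsQMClass C)
    {H : QMObj.{u} L} (hH : H ∈ C) (hunc : Uncountable H.carrier) (X : Set H.carrier)
    (hX : #X < #H.carrier) (m : ℕ) :
    ∃ B : Set H.carrier, B.Finite ∧ ∀ G : Set H.carrier, G.Countable → H.cl G = G →
      G ⊆ H.cl X → ∀ w : Fin m → H.carrier, ∃ w' : Fin m → H.carrier,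
        (∀ i, w' i ∈ H.cl (B ∪ G)) ∧
        IsPartialEmbedding (L := L) (idg G ∪ range fun i => (w i, w' i)) := by
  have hP := hC.pregeom H hH
  induction m with
  | zero =>
    refine ⟨∅, finite_empty, fun G _ _ _ w => ⟨w, fun i => i.elim0, ?_⟩⟩
    rw [range_eq_empty, union_empty]
    exact pe_idg G
  | succ m ih =>
    obtain ⟨B, hB, ih⟩ := ih
    obtain ⟨b, hb⟩ := cl_ne_top hC hH hunc (Z := B ∪ X) (by
      refine (mk_union_le _ _).trans_lt ?_
      have hinf : ℵ₀ ≤ #H.carrier := (aleph0_lt_mk_iff.2 hunc).le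
      exact add_lt_of_lt hinf (hB.lt_aleph0.trans_le hinf) hX)
    refine ⟨B ∪ {b}, hB.union (finite_singleton _), fun G hGc hG hGX w => ?_⟩
    obtain ⟨w', hw', hpe⟩ := ih G hGc hG hGX (Fin.init w)
    set f := range fun i => (Fin.init w i, w' i) with hf
    have hff : f.Finite := finite_range _
    have himg : pimg f ⊆ H.cl (B ∪ G) := by
      rintro _ ⟨_, ⟨i, rfl⟩, rfl⟩
      exact hw' i
    have hmono : H.cl (B ∪ G) ⊆ H.cl (B ∪ {b} ∪ G) :=
      hP.mono (union_subset_union_left _ subset_union_left)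
    have key : ∃ y' ∈ H.cl (B ∪ {b} ∪ G),
        IsPartialEmbedding (L := L) (idg G ∪ (f ∪ {(w (Fin.last m), y')})) := by
      by_cases hy : w (Fin.last m) ∈ H.cl (pdom f ∪ G)
      · obtain ⟨y', h1, h2⟩ := step_cl hC hH hGc hG hff hpe hy
        exact ⟨y', hmono (cl_absorb hC hH himg h1), h2⟩
      · refine ⟨b, hP.subset_cl _ (Or.inl (Or.inr rfl)), ?_⟩
        refine step_indep hC hH hGc hG hff hpe hy ?_
        intro hb'
        apply hb
        have h1 := cl_absorb hC hH himg hb'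
        rw [← hP.idem (B ∪ X)]
        refine hP.mono (union_subset (subset_union_left.trans (hP.subset_cl _)) ?_) h1
        exact hGX.trans (hP.mono subset_union_right)
    obtain ⟨y', hy', hpe'⟩ := key
    refine ⟨Fin.snoc w' y', ?_, pe_mono hpe' (union_subset_union_right _ ?_)⟩
    · intro i
      refine Fin.lastCases ?_ (fun i => ?_) i
      · simpa using hy'
      · simpa using hmono (hw' i)
    · rintro _ ⟨i, rfl⟩
      refine Fin.lastCases ?_ (fun i => ?_) i
      · right; simp
      · left; exact ⟨i, by simp [Fin.init]⟩

theorem main_aux {C : Set (QMObj.{u} L)} (hC : IsQMClass C)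
    {H : QMObj.{u} L} (hH : H ∈ C) (hunc : Uncountable H.carrier)
    (X : Set H.carrier) (hX : #X < #H.carrier)
    (m : ℕ) (p : Set (InfFormula L (↥X ⊕ Fin m) 0)) (hp : IsSigmaType (L := L) p) :
    IsRealized (L := L) p := by
  have hP := hC.pregeom H hH
  by_contra hnot
  have hnot' : ∀ v : Fin m → H.carrier, ∃ φ ∈ p, ¬ φ.RealizeP v := by
    intro v
    by_contra! h
    exact hnot ⟨v, h⟩
  choose F hFp hF using hnot'
  obtain ⟨B, hB, hT⟩ := transfer hC hH hunc X hX m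
  let par : (Fin m → H.carrier) → Set H.carrier := fun v =>
    Subtype.val '' ((Sum.inl : X → X ⊕ Fin m) ⁻¹' (F v).fv)
  have hparc : ∀ v, (par v).Countable := fun v =>
    ((fv_countable (F v)).preimage_of_injOn Sum.inl_injective.injOn).image _
  have hparX : ∀ v, par v ⊆ X := by
    rintro v _ ⟨x, -, rfl⟩; exact x.2
  let step : Set H.carrier → Set H.carrier := fun S =>
    H.cl (S ∪ ⋃ v ∈ pi univ (fun _ : Fin m => H.cl (B ∪ S)), par v)
  let S : ℕ → Set H.carrier := fun n => step^[n] ∅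
  have hS : ∀ n, S (n + 1) = step (S n) := fun n => Function.iterate_succ_apply' _ _ _
  have hSc : ∀ n, (S n).Countable := by
    intro n
    induction n with
    | zero => exact countable_empty
    | succ n ih =>
      rw [hS]
      refine cl_countable hC hH (ih.union (Countable.biUnion ?_ fun v _ => hparc v))
      exact countable_univ_pi fun _ => cl_countable hC hH (hB.countable.union ih)
  have hSX : ∀ n, S n ⊆ H.cl X := by
    intro n
    induction n with
    | zero => exact empty_subset _
    | succ n ih =>
      rw [hS, ← hP.idem X]
      refine hP.mono (union_subset ih (iUnion₂_subset fun v _ => ?_))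
      exact (hparX v).trans (hP.subset_cl X)
  have hSclsub : ∀ n, H.cl (S n) ⊆ S (n + 1) := by
    intro n
    rw [hS]
    exact hP.mono subset_union_left
  have hSmono : Monotone S := monotone_nat_of_le_succ fun n =>
    (hP.subset_cl _).trans (hSclsub n)
  set G := ⋃ n, S n with hGdef
  have hfin : ∀ (T : Finset H.carrier) (B : Set H.carrier), (T : Set H.carrier) ⊆ B ∪ G →
      ∃ n, (T : Set H.carrier) ⊆ B ∪ S n := by
    intro T B hT
    have hd : Directed (· ⊆ ·) fun n => B ∪ S n :=
      (show Monotone fun n => B ∪ S n from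
        fun a b h => union_subset_union_right _ (hSmono h)).directed_le
    refine hd.exists_mem_subset_of_finset_subset_biUnion (s := T) ?_
    rw [← union_iUnion]
    exact hT
  have hclG : ∀ (B : Set H.carrier) y, y ∈ H.cl (B ∪ G) → ∃ n, y ∈ H.cl (B ∪ S n) := by
    intro B y hy
    obtain ⟨T, hT, hy⟩ := hP.finChar _ y hy
    obtain ⟨n, hn⟩ := hfin T B hT
    exact ⟨n, hP.mono hn hy⟩
  have hGc : G.Countable := countable_iUnion hSc
  have hG : H.cl G = G := by
    refine Subset.antisymm (fun y hy => ?_) (hP.subset_cl _)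
    obtain ⟨n, hn⟩ := hclG ∅ y (by rwa [empty_union])
    rw [empty_union] at hn
    exact mem_iUnion.2 ⟨n + 1, hSclsub n hn⟩
  have hGX : G ⊆ H.cl X := iUnion_subset hSX
  have hparG : ∀ v : Fin m → H.carrier, (∀ i, v i ∈ H.cl (B ∪ G)) → par v ⊆ G := by
    intro v hv
    choose N hN using fun i => hclG B (v i) (hv i)
    obtain ⟨M, hM⟩ := (finite_range N).bddAbove
    have hv' : v ∈ pi univ (fun _ : Fin m => H.cl (B ∪ S M)) := fun i _ =>
      hP.mono (union_subset_union_right _ (hSmono (hM ⟨i, rfl⟩))) (hN i)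
    have h1 : par v ⊆ S (M + 1) := by
      rw [hS]
      refine Subset.trans ?_ (hP.subset_cl _)
      exact (subset_biUnion_of_mem (u := par) hv').trans subset_union_right
    exact h1.trans (subset_iUnion S (M + 1))
  let V : Set (Fin m → H.carrier) := pi univ fun _ => H.cl (B ∪ G)
  have hVc : V.Countable :=
    countable_univ_pi fun _ => cl_countable hC hH (hB.countable.union hGc)
  obtain ⟨w, hw⟩ := hp (F '' V) (by rintro _ ⟨v, -, rfl⟩; exact hFp v) (hVc.image _)
  obtain ⟨w', hw', hpe⟩ := hT G hGc hG hGX w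
  apply hF w'
  have h1 := hw (F w') ⟨w', fun i _ => hw' i, rfl⟩
  refine (elementary hC hH hunc hGc hG (F w') _ (finite_range _) hpe _ _ _ _ ?_
    (fun i => i.elim0)).1 h1
  rintro (x | i) hx
  · left
    exact ⟨hparG w' hw' ⟨x, hx, rfl⟩, rfl⟩
  · right
    exact ⟨i, rfl⟩

end cls

end Helpers

/-- Every uncountable `H ∈ C` is σ-saturated: every σ-type over a set of
cardinality less than `|H|` is realised in `H`. -/
theorem statement_7 {L : FirstOrder.Language.{v, w}} (C : Set (QMObj.{u} L))
    (hC : IsQMClass C) (H : QMObj.{u} L) (hH : H ∈ C)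
    (hunc : Uncountable H.carrier)
    (X : Set H.carrier) (hX : Cardinal.mk ↥X < Cardinal.mk H.carrier)
    (m : ℕ) (p : Set (InfFormula L (↥X ⊕ Fin m) 0)) (hp : IsSigmaType (L := L) p) :
    IsRealized (L := L) p := by
  exact main_aux hC hH hunc X hX m p hp

end QM
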